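/- arXiv:2502.07602 — 5 statements merged into one kernel-verified Lean document; each statement's English description precedes it below -/
import Mathlib

section
/- Let K ≥ 1 be an integer and let α_0, α_1, …, α_K be positive real numbers. With t_{i,j} and s_{i,j} defined as in the context, for every pair of indices with 2 ≤ i ≤ K−1 and 0 ≤ j ≤ i−2 one has s_{i+1,j} = ((α_i − 1)/α_{i+1}) · s_{i,j}. -/
/-- Lemma 16 of Jang–Gupta–Ryu (second part, first case), as used in the paper:
for `2 ≤ i ≤ K - 1` and `0 ≤ j ≤ i - 2`,
`s_{i+1,j} = ((α_i - 1)/α_{i+1}) · s_{i,j}`. -/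
theorem stmt_1 (K : ℕ) (hK : 1 ≤ K) (α : ℕ → ℝ)
    (hα : ∀ k, k ≤ K → 0 < α k)
    (t s : ℕ → ℕ → ℝ)
    (ht_diag : ∀ i, i < K → t (i + 1) i = 1 + (2 * α i - 1) / α (i + 1))
    (ht_off : ∀ i j, j < i → i < K →
      t (i + 1) j = t (j + 1) j + ∑ k ∈ Finset.Icc (j + 1) i, (2 * α j - t k j) / α (k + 1))
    (hs_off : ∀ i j, j < i → i < K → s (i + 1) j = t (i + 1) j - t i j)
    (hs_diag : ∀ i, i < K → s (i + 1) i = t (i + 1) i) :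
    ∀ i j, 2 ≤ i → i < K → j + 2 ≤ i →
      s (i + 1) j = (α i - 1) / α (i + 1) * s i j := by
  have step : ∀ i j, j < i → i < K → t (i + 1) j - t i j = (2 * α j - t i j) / α (i + 1) := by
    intro i j hj hi
    obtain ⟨m, rfl⟩ : ∃ m, i = m + 1 := ⟨i - 1, by omega⟩
    rw [ht_off (m + 1) j hj hi, Finset.sum_Icc_succ_top (by omega)]
    rcases Nat.lt_or_ge j m with h | h
    · rw [ht_off m j h (by omega)]
      ring
    · have hjm : j = m := by omega
      subst hjm
      simp
  intro i j h2 hi hj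
  obtain ⟨m, rfl⟩ : ∃ m, i = m + 1 := ⟨i - 1, by omega⟩
  rw [hs_off (m + 1) j (by omega) hi, hs_off m j (by omega) (by omega),
    step (m + 1) j (by omega) hi]
  have h1 := step m j (by omega) (by omega)
  have hp := (hα (m + 1) (by omega)).ne'
  have hq := (hα (m + 1 + 1) (by omega)).ne'
  rw [eq_div_iff hp] at h1
  rw [div_mul_eq_mul_div]
  congr 1
  linarith
end

section
/- Let K ≥ 2 be an integer and let α_0,…,α_K be the specific sequence defined in the context. With t_{i,j} defined as in the context, for every index j with 0 ≤ j ≤ K−2 one has (α_{j+1}/(2α_j − 1)) · (t_{K,j} − 1) − 1 = ((α_{j+1} − 1)/(2α_{j+1} − 1)) · (t_{K,j+1} − 1). -/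
/-- Lemma 18 of Jang–Gupta–Ryu, as used in the paper: with the specific
sequence `α` of the (I)OptISTA algorithm and `t` defined by the recursions of
the context, for `0 ≤ j ≤ K - 2`,
`(α_{j+1}/(2α_j - 1))(t_{K,j} - 1) - 1 = ((α_{j+1} - 1)/(2α_{j+1} - 1))(t_{K,j+1} - 1)`. -/
theorem stmt_3 (K : ℕ) (hK : 2 ≤ K) (α : ℕ → ℝ)
    (hα0 : α 0 = 1)
    (hαmid : ∀ k, 1 ≤ k → k < K →
      α k = (1 + Real.sqrt (1 + 4 * α (k - 1) ^ 2)) / 2)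
    (hαK : α K = (1 + Real.sqrt (1 + 8 * α (K - 1) ^ 2)) / 2)
    (t : ℕ → ℕ → ℝ)
    (ht_diag : ∀ i, i < K → t (i + 1) i = 1 + (2 * α i - 1) / α (i + 1))
    (ht_off : ∀ i j, j < i → i < K →
      t (i + 1) j = t (j + 1) j + ∑ k ∈ Finset.Icc (j + 1) i, (2 * α j - t k j) / α (k + 1)) :
    ∀ j, j ≤ K - 2 →
      α (j + 1) / (2 * α j - 1) * (t K j - 1) - 1
        = (α (j + 1) - 1) / (2 * α (j + 1) - 1) * (t K (j + 1) - 1) := by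
  have hge : ∀ k, k ≤ K → 1 ≤ α k := by
    intro k hk
    have hs : ∀ x : ℝ, 0 ≤ x → 1 ≤ (1 + Real.sqrt (1 + x)) / 2 := by
      intro x hx
      have : (1 : ℝ) ≤ Real.sqrt (1 + x) := by
        rw [Real.one_le_sqrt]; linarith
      linarith
    rcases Nat.eq_zero_or_pos k with h0 | h0
    · rw [h0, hα0]
    · rcases Nat.lt_or_ge k K with h1 | h1
      · rw [hαmid k h0 h1]; exact hs _ (by positivity)
      · have : k = K := le_antisymm hk h1
        rw [this, hαK]; exact hs _ (by positivity)
  have hstep : ∀ i j, j < i → i < K →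
      t (i + 1) j = t i j + (2 * α j - t i j) / α (i + 1) := by
    intro i j hji hi
    rw [ht_off i j hji hi]
    obtain ⟨m, rfl⟩ : ∃ m, i = m + 1 := ⟨i - 1, by omega⟩
    rw [Finset.sum_Icc_succ_top (by omega), ← add_assoc]
    congr 1
    rcases Nat.lt_or_ge j m with h | h
    · exact (ht_off m j h (by omega)).symm
    · have : m = j := by omega
      subst this
      simp
  intro j hj
  have key : ∀ i, j + 2 ≤ i → i ≤ K →
      α (j + 1) / (2 * α j - 1) * (t i j - 1) - 1
        = (α (j + 1) - 1) / (2 * α (j + 1) - 1) * (t i (j + 1) - 1) := by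
    have hA := hge j (by omega)
    have hB := hge (j + 1) (by omega)
    have h1 : 2 * α j - 1 ≠ 0 := by intro h; linarith
    have h2 : 2 * α (j + 1) - 1 ≠ 0 := by intro h; linarith
    have h3 : α (j + 1) ≠ 0 := by intro h; linarith
    intro i hi
    induction i, hi using Nat.le_induction with
    | base =>
      intro hi
      have hC := hge (j + 2) hi
      have h4 : α (j + 1 + 1) ≠ 0 := by intro h; rw [h] at hC; linarith
      rw [show j + 2 = j + 1 + 1 from rfl, hstep (j + 1) j (by omega) (by omega),
        ht_diag j (by omega), ht_diag (j + 1) (by omega)]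
      clear hC hB
      generalize α (j + 1 + 1) = c at *
      generalize α (j + 1) = b at *
      generalize hd : 2 * b - 1 = d at *
      field_simp
      rw [← hd]
      ring
    | succ i hij ih =>
      intro hi
      have ih' := ih (by omega)
      have hC := hge (i + 1) hi
      have h4 : α (i + 1) ≠ 0 := by intro h; linarith
      rw [hstep i j (by omega) (by omega), hstep i (j + 1) (by omega) (by omega)]
      have e1 : α (j + 1) / (2 * α j - 1) * (t i j + (2 * α j - t i j) / α (i + 1) - 1) - 1
          = (α (j + 1) / (2 * α j - 1) * (t i j - 1) - 1) * (1 - 1 / α (i + 1))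
            + (α (j + 1) - 1) / α (i + 1) := by
        field_simp
        ring
      rw [e1, ih']
      clear e1 ih' ih hC hB
      generalize α (i + 1) = c at *
      generalize α (j + 1) = b at *
      generalize hd : 2 * b - 1 = d at *
      field_simp
      rw [← hd]
      ring
  exact key K (by omega) le_rfl
end

section
/- Let K ≥ 1 be an integer and let α_0,…,α_K be the specific sequence defined in the context. With t_{i,j} defined as in the context, for every index j with 0 ≤ j ≤ K−1 one has t_{K,j} = (2α_j/α_K²) · (α_K² − 2α_j² + α_j); that is, the step sizes γ_j = (2α_j/α_K²)(α_K² − 2α_j² + α_j) of the IOptISTA algorithm coincide with the coefficients t_{K,j}. -/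
/-- With the specific sequence `α` of the (I)OptISTA algorithm and `t` defined
by the recursions of the context, for `0 ≤ j ≤ K - 1` the step sizes
`γ_j = (2α_j/α_K²)(α_K² - 2α_j² + α_j)` coincide with the coefficients `t_{K,j}`. -/
theorem stmt_4 (K : ℕ) (hK : 1 ≤ K) (α : ℕ → ℝ)
    (hα0 : α 0 = 1)
    (hαmid : ∀ k, 1 ≤ k → k < K →
      α k = (1 + Real.sqrt (1 + 4 * α (k - 1) ^ 2)) / 2)
    (hαK : α K = (1 + Real.sqrt (1 + 8 * α (K - 1) ^ 2)) / 2)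
    (t : ℕ → ℕ → ℝ)
    (ht_diag : ∀ i, i < K → t (i + 1) i = 1 + (2 * α i - 1) / α (i + 1))
    (ht_off : ∀ i j, j < i → i < K →
      t (i + 1) j = t (j + 1) j + ∑ k ∈ Finset.Icc (j + 1) i, (2 * α j - t k j) / α (k + 1)) :
    ∀ j, j < K →
      t K j = 2 * α j / α K ^ 2 * (α K ^ 2 - 2 * α j ^ 2 + α j) := by
  have hpos : ∀ k, k ≤ K → 0 < α k := by
    intro k hk
    rcases Nat.eq_zero_or_pos k with rfl | h0
    · rw [hα0]; norm_num
    · rcases Nat.lt_or_eq_of_le hk with h | rfl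
      · rw [hαmid k h0 h]; positivity
      · rw [hαK]; positivity
  have hsq : ∀ k, k + 1 < K → α (k + 1) ^ 2 - α (k + 1) = α k ^ 2 := by
    intro k hk
    have h := hαmid (k + 1) (by omega) hk
    rw [Nat.add_sub_cancel] at h
    have h2 := Real.sq_sqrt (show (0 : ℝ) ≤ 1 + 4 * α k ^ 2 by positivity)
    rw [h]
    linear_combination h2 / 4
  have hstep : ∀ i j, j < i → i < K →
      t (i + 1) j = t i j + (2 * α j - t i j) / α (i + 1) := by
    intro i j hji hi
    rw [ht_off i j hji hi]
    obtain ⟨m, rfl⟩ : ∃ m, i = m + 1 := ⟨i - 1, by omega⟩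
    rw [Finset.sum_Icc_succ_top (by omega), ← add_assoc]
    congr 1
    rcases Nat.lt_or_eq_of_le (Nat.lt_succ_iff.mp hji) with h | rfl
    · rw [ht_off m j h (by omega)]
    · simp
  have hmain : ∀ j i, j ≤ i → i < K →
      t (i + 1) j = 2 * α j - (2 * α j - 1) * (α j ^ 2 / α i ^ 2) * (1 - 1 / α (i + 1)) := by
    intro j i hji
    induction i, hji using Nat.le_induction with
    | base =>
      intro hj
      have h1 := (hpos j hj.le).ne'
      have h2 := (hpos (j + 1) hj).ne'
      rw [ht_diag j hj]
      field_simp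
      ring
    | succ i hji ih =>
      intro hi
      have h1 := (hpos i (by omega)).ne'
      have h2 := (hpos (i + 1) hi.le).ne'
      have h3 := (hpos (i + 1 + 1) hi).ne'
      have hs := hsq i hi
      have e : 1 / α i ^ 2 * (1 - 1 / α (i + 1)) = 1 / α (i + 1) ^ 2 := by
        field_simp
        linear_combination hs
      rw [hstep (i + 1) j (by omega) hi, ih (by omega)]
      linear_combination (-(2 * α j - 1) * α j ^ 2 * (1 - 1 / α (i + 1 + 1))) * e
  intro j hj
  obtain ⟨m, rfl⟩ : ∃ m, K = m + 1 := ⟨K - 1, by omega⟩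
  rw [hmain j m (by omega) (by omega)]
  have h1 := (hpos m (by omega)).ne'
  have h2 := (hpos (m + 1) le_rfl).ne'
  rw [Nat.add_sub_cancel] at hαK
  have h3 := Real.sq_sqrt (show (0 : ℝ) ≤ 1 + 8 * α m ^ 2 by positivity)
  have hs : α (m + 1) ^ 2 - α (m + 1) = 2 * α m ^ 2 := by
    rw [hαK]
    linear_combination h3 / 4
  have e : 1 / α m ^ 2 * (1 - 1 / α (m + 1)) = 2 / α (m + 1) ^ 2 := by
    field_simp
    linear_combination hs
  have e2 : α (m + 1) ^ 2 / α (m + 1) ^ 2 = 1 := div_self (pow_ne_zero 2 h2)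
  linear_combination (-(2 * α j - 1) * α j ^ 2) * e - 2 * α j * e2
end

section
/- Consider the IOptISTA iterates as in the context, with positive reals α_0,…,α_K satisfying α_0 = 1 and arbitrary positive step parameters γ_0,…,γ_{K−1} and η_0,…,η_{K−1}, and let t_{i,j} be defined as in the context. Then for every i with 0 ≤ i ≤ K−1, the x-iterate satisfies the closed form x_{i+1} = x_0 − Σ_{j=0}^{i} t_{i+1,j} η_j W(∇f(x_j)) − Σ_{j=0}^{i} t_{i+1,j} η_j h'_{j+1}. -/
/-- Closed form for the `x`-iterates of IOptISTA:
`x_{i+1} = x_0 - ∑_{j=0}^{i} t_{i+1,j} η_j W(∇f(x_j)) - ∑_{j=0}^{i} t_{i+1,j} η_j h'_{j+1}`,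
where `h'_{j+1} = (1/(η_j γ_j)) (y_j - η_j γ_j W(∇f(x_j)) - y_{j+1})`. -/
theorem stmt_6 {E : Type*} [NormedAddCommGroup E] [InnerProductSpace ℝ E] [CompleteSpace E]
    (f : E → ℝ) (f' : E → E) (hf : ∀ x, HasGradientAt f (f' x) x)
    (h : E → ℝ) (hconv : ConvexOn ℝ Set.univ h)
    (W : E →L[ℝ] E)
    (K : ℕ) (hK : 1 ≤ K)
    (α : ℕ → ℝ) (hαpos : ∀ k, k ≤ K → 0 < α k) (hα0 : α 0 = 1)
    (γ η : ℕ → ℝ) (hγ : ∀ k, k < K → 0 < γ k) (hη : ∀ k, k < K → 0 < η k)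
    (t : ℕ → ℕ → ℝ)
    (ht_diag : ∀ i, i < K → t (i + 1) i = 1 + (2 * α i - 1) / α (i + 1))
    (ht_off : ∀ i j, j < i → i < K →
      t (i + 1) j = t (j + 1) j + ∑ k ∈ Finset.Icc (j + 1) i, (2 * α j - t k j) / α (k + 1))
    (x y z : ℕ → E)
    (hxy0 : x 0 = y 0) (hz0 : z 0 = x 0)
    (hprox : ∀ k, k < K → ∀ u : E,
      h (y (k + 1)) + 1 / (2 * (γ k * η k)) * ‖y (k + 1) - (y k - (γ k * η k) • W (f' (x k)))‖ ^ 2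
        ≤ h u + 1 / (2 * (γ k * η k)) * ‖u - (y k - (γ k * η k) • W (f' (x k)))‖ ^ 2)
    (hz : ∀ k, k < K → z (k + 1) = x k + (1 / γ k) • (y (k + 1) - y k))
    (hx : ∀ k, k < K → x (k + 1) = z (k + 1) + ((α k - 1) / α (k + 1)) • (z (k + 1) - z k)
        + (α k / α (k + 1)) • (z (k + 1) - x k))
    (g : ℕ → E)
    (hg : ∀ j, j < K →
      g j = (1 / (η j * γ j)) • (y j - (η j * γ j) • W (f' (x j)) - y (j + 1))) :
    ∀ i, i < K →
      x (i + 1) = x 0 - ∑ j ∈ Finset.range (i + 1), (t (i + 1) j * η j) • W (f' (x j))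
        - ∑ j ∈ Finset.range (i + 1), (t (i + 1) j * η j) • g j := by
  have hrec : ∀ k j, j < k → k < K →
      t (k + 1) j = t k j + (2 * α j - t k j) / α (k + 1) := by
    intro k j hjk hk
    rw [ht_off k j hjk hk]
    obtain ⟨m, rfl⟩ : ∃ m, k = m + 1 := ⟨k - 1, by omega⟩
    rw [Finset.sum_Icc_succ_top (by omega), ← add_assoc]
    congr 1
    rcases Nat.lt_or_ge j m with hjm | hjm
    · rw [ht_off m j hjm (by omega)]
    · obtain rfl : j = m := by omega
      simp
  let d : ℕ → E := fun j => (1 / γ j) • (y (j + 1) - y j)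
  have hd : ∀ j, j < K → η j • W (f' (x j)) + η j • g j = - d j := by
    intro j hj
    have h1 := (hγ j hj).ne'
    have h2 := (hη j hj).ne'
    simp only [d]
    rw [hg j hj]
    match_scalars <;> field_simp <;> ring
  have hzd : ∀ k, k < K → z (k + 1) = x k + d k := hz
  clear_value d
  have key : ∀ k, k ≤ K →
      (α k • (x k - z k) + z k = x 0 + ∑ j ∈ Finset.range k, (2 * α j) • d j) ∧
      x k = x 0 + ∑ j ∈ Finset.range k, t k j • d j := by
    intro k
    induction k with
    | zero => intro _; simp [hz0]
    | succ k ih =>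
      intro hk
      obtain ⟨hB, hX⟩ := ih (by omega)
      have ha := (hαpos (k + 1) hk).ne'
      have hzk : z (k + 1) = x k + d k := hzd k (by omega)
      have hxk := hx k (by omega)
      constructor
      · rw [Finset.sum_range_succ, ← add_assoc, ← hB, hxk, hzk]
        match_scalars <;> field_simp <;> ring
      · have hs : ∑ j ∈ Finset.range k, t (k + 1) j • d j
            = ∑ j ∈ Finset.range k, t k j • d j
              + (1 / α (k + 1)) • (∑ j ∈ Finset.range k, (2 * α j) • d j
                - ∑ j ∈ Finset.range k, t k j • d j) := by
          rw [← Finset.sum_sub_distrib, Finset.smul_sum, ← Finset.sum_add_distrib]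
          refine Finset.sum_congr rfl fun j hj => ?_
          rw [hrec k j (Finset.mem_range.mp hj) (by omega)]
          match_scalars
          field_simp
        have e1 := eq_sub_of_add_eq' hB.symm
        have e2 := eq_sub_of_add_eq' hX.symm
        rw [Finset.sum_range_succ, hs, e1, e2, ht_diag k (by omega), hxk, hzk]
        match_scalars <;> field_simp <;> ring
  intro i hi
  rw [(key (i + 1) hi).2, sub_sub, ← Finset.sum_add_distrib, sub_eq_add_neg,
    ← Finset.sum_neg_distrib]
  congr 1
  refine Finset.sum_congr rfl fun j hj => ?_
  have := hd j (by have := Finset.mem_range.mp hj; omega)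
  rw [mul_smul, mul_smul, ← smul_add, this, smul_neg, neg_neg]
end

section
/- Consider the IOptISTA iterates as in the context, where α_0,…,α_K is the specific sequence defined there and the step parameters are γ_k = (2α_k/α_K²)(α_K² − 2α_k² + α_k) for 0 ≤ k ≤ K−1, with arbitrary positive η_0,…,η_{K−1} (assume each γ_k > 0). Then the final iterates coincide: x_K = y_K. -/
/-- Lemma 1 of the paper: with the specific parameter sequence `α` of IOptISTA
and step sizes `γ_k = (2α_k/α_K²)(α_K² - 2α_k² + α_k)`, the final iterates of
the IOptISTA algorithm coincide: `x_K = y_K`. -/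
theorem stmt_8 {E : Type*} [NormedAddCommGroup E] [InnerProductSpace ℝ E] [CompleteSpace E]
    (f : E → ℝ) (f' : E → E) (hf : ∀ x, HasGradientAt f (f' x) x)
    (h : E → ℝ) (hconv : ConvexOn ℝ Set.univ h)
    (W : E →L[ℝ] E)
    (K : ℕ) (hK : 1 ≤ K)
    (α : ℕ → ℝ) (hα0 : α 0 = 1)
    (hαmid : ∀ k, 1 ≤ k → k < K →
      α k = (1 + Real.sqrt (1 + 4 * α (k - 1) ^ 2)) / 2)
    (hαK : α K = (1 + Real.sqrt (1 + 8 * α (K - 1) ^ 2)) / 2)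
    (γ : ℕ → ℝ)
    (hγdef : ∀ k, k < K → γ k = 2 * α k / α K ^ 2 * (α K ^ 2 - 2 * α k ^ 2 + α k))
    (hγpos : ∀ k, k < K → 0 < γ k)
    (η : ℕ → ℝ) (hη : ∀ k, k < K → 0 < η k)
    (x y z : ℕ → E)
    (hxy0 : x 0 = y 0) (hz0 : z 0 = x 0)
    (hprox : ∀ k, k < K → ∀ u : E,
      h (y (k + 1)) + 1 / (2 * (γ k * η k)) * ‖y (k + 1) - (y k - (γ k * η k) • W (f' (x k)))‖ ^ 2
        ≤ h u + 1 / (2 * (γ k * η k)) * ‖u - (y k - (γ k * η k) • W (f' (x k)))‖ ^ 2)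
    (hz : ∀ k, k < K → z (k + 1) = x k + (1 / γ k) • (y (k + 1) - y k))
    (hx : ∀ k, k < K → x (k + 1) = z (k + 1) + ((α k - 1) / α (k + 1)) • (z (k + 1) - z k)
        + (α k / α (k + 1)) • (z (k + 1) - x k)) :
    x K = y K := by
  have hpos : ∀ k, k ≤ K → 0 < α k := by
    intro k hk
    rcases Nat.eq_zero_or_pos k with rfl | h0
    · rw [hα0]; norm_num
    · rcases Nat.lt_or_eq_of_le hk with h1 | rfl
      · rw [hαmid k h0 h1]; positivity
      · rw [hαK]; positivity
  have hrec : ∀ k, k + 1 < K → α (k + 1) ^ 2 - α (k + 1) = α k ^ 2 := by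
    intro k hk
    have e := hαmid (k + 1) (by omega) hk
    rw [Nat.add_sub_cancel] at e
    have hs := Real.sq_sqrt (show (0 : ℝ) ≤ 1 + 4 * α k ^ 2 by positivity)
    rw [e]; linear_combination hs / 4
  have hrecK : α K ^ 2 - α K = 2 * α (K - 1) ^ 2 := by
    have hs := Real.sq_sqrt (show (0 : ℝ) ≤ 1 + 8 * α (K - 1) ^ 2 by positivity)
    rw [hαK]; linear_combination hs / 4
  have hA : α K ≠ 0 := (hpos K le_rfl).ne'
  have hy : ∀ k, k < K → (α K ^ 2) • y (k + 1) = (α K ^ 2) • y k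
      + (2 * α k * (α K ^ 2 - 2 * α k ^ 2 + α k)) • (z (k + 1) - x k) := by
    intro k hk
    have hg := (hγpos k hk).ne'
    have e1 : y (k + 1) = y k + γ k • (z (k + 1) - x k) := by
      rw [hz k hk, add_sub_cancel_left, smul_smul, mul_one_div_cancel hg, one_smul]
      abel
    have e2 : α K ^ 2 * γ k = 2 * α k * (α K ^ 2 - 2 * α k ^ 2 + α k) := by
      rw [hγdef k hk]; field_simp
    rw [e1, smul_add, smul_smul, e2]
  have hw : ∀ k, k < K → α (k + 1) • x (k + 1) = α (k + 1) • z (k + 1)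
      + (α k - 1) • (z (k + 1) - z k) + α k • (z (k + 1) - x k) := by
    intro k hk
    have ha := (hpos (k + 1) hk).ne'
    rw [hx k hk, smul_add, smul_add, smul_smul, smul_smul, mul_div_cancel₀ _ ha,
      mul_div_cancel₀ _ ha]
  -- the auxiliary point `w k = α k x k - (α k - 1) z k`
  obtain ⟨w, hwdef⟩ : ∃ w : ℕ → E, ∀ k, w k = α k • x k - (α k - 1) • z k := ⟨_, fun _ => rfl⟩
  have hws : ∀ k, k < K → w (k + 1) = w k + (2 * α k) • (z (k + 1) - x k) := by
    intro k hk
    rw [hwdef, hwdef, hw k hk]; module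
  have step : ∀ k, k < K →
      (α K ^ 2) • y k = (α K ^ 2) • w k - (2 * (α k ^ 2 - α k)) • (w k - z k) →
      (α K ^ 2) • y (k + 1) = (α K ^ 2) • w (k + 1)
        - (2 * α k ^ 2) • (w (k + 1) - z (k + 1)) := by
    intro k hk e
    rw [hy k hk, e, hws k hk, hwdef k]
    module
  have inv : ∀ k, k < K → (α K ^ 2) • y (k + 1) = (α K ^ 2) • w (k + 1)
        - (2 * α k ^ 2) • (w (k + 1) - z (k + 1)) := by
    intro k
    induction k with
    | zero =>
      intro hk
      apply step 0 hk
      rw [hwdef, hα0, hz0, hxy0]; module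
    | succ n ih =>
      intro hk
      apply step (n + 1) hk
      rw [hrec n hk]
      exact ih (by omega)
  have fin := inv (K - 1) (by omega)
  rw [Nat.sub_add_cancel hK, ← hrecK, hwdef] at fin
  have : (α K ^ 2) • x K = (α K ^ 2) • y K := by
    rw [fin]; module
  exact smul_right_injective E (pow_ne_zero 2 hA) this
end
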